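/- Suppose 𝓘, 𝓖 are collections of subsets of ℕ, A ⊆ ℕ, and 𝓑 = {B₁,…,B_k} is a finite collection of subsets of ℕ such that: (a) 𝓘 is countable and downwards ≤_e-closed; (b) 𝓖 is countable, disjoint from 𝓘, and closed under ≡_e; (c) A ∈ 𝓘 and, for every 1 ≤ i ≤ k, B_i ∈ 𝓘 and B_i ≰_e A. Then there exist collections 𝓘⁺ ⊇ 𝓘 and 𝓖⁺ ⊇ 𝓖 and a set C ⊆ ℕ such that: 𝓘⁺ and 𝓖⁺ are countable; 𝓘⁺ is downwards ≤_e-closed; 𝓖⁺ is closed under ≡_e and disjoint from 𝓘⁺; C >_e A (i.e., A ≤_e C and C ≰_e A); C ∈ 𝓘⁺; and for every 1 ≤ i ≤ k there is D ∈ 𝓖⁺ with D ≤_e B_i ⊕ C (hence B_i ⊕ C ∉ 𝓘⁺). -/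

import Mathlib

/-!
Take `C = A ⊕ x` with `x` sufficiently generic, `𝓘⁺ = 𝓘 ∪ {X : X ≤ₑ C}`, and let `𝓖⁺` be `𝓖`
together with the enumeration degrees of the sets `Bᵢ ⊕ C`; the witness `D` for `i` is `Bᵢ ⊕ C`.
All that is required of `C` is `A ≤ₑ C`, `C ∉ 𝓘`, and `Y ≰ₑ C` for each of the countably many sets
`Y` in `𝓖 ∪ {B₁, …, B_k}`, none of which is `≤ₑ A`. Indeed `Bᵢ ⊕ C ∉ 𝓘` since `C ∉ 𝓘`, and
`Bᵢ ⊕ C ≰ₑ C` since `Bᵢ ≰ₑ C`.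

Such a `C` comes from the Baire category theorem in Cantor space (`exists_generic`). The set of `x`
with `A ⊕ x ∈ 𝓘` is countable, hence meagre. For `Y ≰ₑ A` and a c.e. set `W`, the set
`K = {x : Φ_W(A ⊕ x) ⊆ Y}` is closed. If `Φ_W(A ⊕ x) = Y` with `x` in the interior of `K`, then `K`
contains a cofinite `z ⊇ x`, so that `Y = Φ_W(A ⊕ z) ≤ₑ A ⊕ z ≤ₑ A`, a contradiction
(`enumRed_of_mem_interior`). Hence `Y ≤ₑ A ⊕ x` only if `x` is on the frontier of `K` for some `W`,
and a countable union of frontiers of closed sets is meagre (`isMeagre_enumRed`).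

The computability needed is that `≤ₑ` is transitive (`EnumRed.trans`), shown by writing c.e. sets as
increasing unions of primitive recursive stages, and that there are only countably many c.e. sets.
-/

def Dset (u : ℕ) : Set ℕ := {i | Nat.testBit u i}

def enumOp (W A : Set ℕ) : Set ℕ := {x | ∃ u, Nat.pair x u ∈ W ∧ Dset u ⊆ A}

def CE (W : Set ℕ) : Prop := ∃ f : ℕ →. ℕ, Partrec f ∧ W = f.Dom

def EnumRed (A B : Set ℕ) : Prop := ∃ W, CE W ∧ A = enumOp W B

def EnumEq (A B : Set ℕ) : Prop := EnumRed A B ∧ EnumRed B A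

def WeStd (e : ℕ) : Set ℕ := {x | ((Denumerable.ofNat Nat.Partrec.Code e).eval x).Dom}

def PhiStd (e : ℕ) : Set ℕ → Set ℕ := enumOp (WeStd e)

def pgraph (φ : ℕ →. ℕ) : Set ℕ := {n | n.unpair.2 ∈ φ n.unpair.1}

def peRed (φ ψ : ℕ →. ℕ) : Prop := EnumRed (pgraph φ) (pgraph ψ)

def pfAdd (φ ψ : ℕ →. ℕ) : ℕ →. ℕ := fun n => if n % 2 = 0 then φ (n / 2) else ψ (n / 2)

def pfCons (i : ℕ) (φ : ℕ →. ℕ) : ℕ →. ℕ := fun n => if n = 0 then Part.some i else φ (n - 1)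

abbrev MassPb := Set (ℕ →. ℕ)

def mpPlus (A B : MassPb) : MassPb := {h | ∃ φ ∈ A, ∃ ψ ∈ B, h = pfAdd φ ψ}

def mpCons (i : ℕ) (A : MassPb) : MassPb := pfCons i '' A

def mpWedge (A B : MassPb) : MassPb := mpCons 0 A ∪ mpCons 1 B

def mpArrow (A B : MassPb) : MassPb :=
  {h | ∃ e φ, h = pfCons e φ ∧ ∀ ψ ∈ A, ∃ χ ∈ B, pgraph χ = PhiStd e (pgraph (pfAdd φ ψ))}

def DRed (A B : MassPb) : Prop :=
  ∃ W, CE W ∧ ∀ ψ ∈ B, ∃ χ ∈ A, pgraph χ = enumOp W (pgraph ψ)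

def DEq (A B : MassPb) : Prop := DRed A B ∧ DRed B A

def DwRed (A B : MassPb) : Prop := ∀ ψ ∈ B, ∃ φ ∈ A, peRed φ ψ

def DwEq (A B : MassPb) : Prop := DwRed A B ∧ DwRed B A

def UpClosedE (A : MassPb) : Prop := ∀ φ ψ, φ ∈ A → peRed φ ψ → ψ ∈ A

def DMProblem (A : MassPb) : Prop := A.Nonempty ∧ UpClosedE A

def PartCompFn (φ : ℕ →. ℕ) : Prop := CE (pgraph φ)

def oplus (A B : Set ℕ) : Set ℕ := (fun x => 2*x) '' A ∪ (fun x => 2*x+1) '' B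

/-- A collection of subsets of `ℕ` is downwards `≤ₑ`-closed. -/
def DownClosedE (I : Set (Set ℕ)) : Prop := ∀ X Y : Set ℕ, EnumRed X Y → Y ∈ I → X ∈ I

/-- A collection of subsets of `ℕ` is closed under `≡ₑ`. -/
def EClosedEq (G : Set (Set ℕ)) : Prop := ∀ X Y : Set ℕ, EnumEq X Y → X ∈ G → Y ∈ G

open Nat.Partrec (Code)

/-! ### Computably enumerable sets and canonical indices -/

/-- A c.e. set is the union of a primitive recursive, increasing sequence of stages. -/
lemma CE.exists_stage {W : Set ℕ} (hW : CE W) :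
    ∃ P : ℕ → ℕ → Prop, PrimrecRel P ∧ (∀ x s t, s ≤ t → P x s → P x t) ∧
      ∀ x, x ∈ W ↔ ∃ s, P x s := by
  obtain ⟨f, hf, rfl⟩ := hW
  obtain ⟨c, rfl⟩ := Code.exists_code.1 (Partrec.nat_iff.1 hf)
  refine ⟨fun x s => (Code.evaln s c x).isSome = true, ?_, ?_, ?_⟩
  · refine ⟨inferInstance, ?_⟩
    have h : Primrec fun p : ℕ × ℕ => (Code.evaln p.2 c p.1).isSome :=
      Primrec.option_isSome.comp (Code.primrec_evaln.comp
        ((Primrec.snd.pair (Primrec.const c)).pair Primrec.fst))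
    exact h.of_eq fun p => by simp
  · intro x s t hst h
    obtain ⟨a, ha⟩ := Option.isSome_iff_exists.1 h
    exact Option.isSome_iff_exists.2 ⟨a, Code.evaln_mono hst ha⟩
  · intro x
    rw [PFun.mem_dom]
    simp only [Code.evaln_complete, Option.isSome_iff_exists, Option.mem_def]
    exact exists_comm

lemma CE.of_primrecRel {P : ℕ → ℕ → Prop} (hP : PrimrecRel P) : CE {x | ∃ s, P x s} := by
  obtain ⟨hd, hp⟩ := hP
  have (x s : ℕ) : Decidable (P x s) := hd (x, s)
  have hp : Primrec fun p : ℕ × ℕ => decide (P p.1 p.2) := hp.of_eq fun _ => by congr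
  refine ⟨fun x => Nat.rfind fun s => Part.some (decide (P x s)), ?_, ?_⟩
  · exact Partrec.rfind (Computable.partrec hp.to_comp).to₂
  · ext x
    refine Iff.trans ?_ (Nat.rfind_dom (p := fun s => Part.some (decide (P x s)))).symm
    simp

lemma PrimrecRel.ce_setOf_exists {P : ℕ → ℕ → Prop} (hP : PrimrecRel P) {W : Set ℕ}
    (hW : ∀ x, x ∈ W ↔ ∃ s, P x s) : CE W := by
  have : W = {x | ∃ s, P x s} := Set.ext hW
  exact this ▸ CE.of_primrecRel hP

lemma PrimrecPred.ce {P : ℕ → Prop} (hP : PrimrecPred P) : CE {x | P x} := by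
  have h : PrimrecRel fun x (_ : ℕ) => P x := hP.comp Primrec.fst
  exact h.ce_setOf_exists fun x => by simp

lemma primrec_two_pow : Primrec fun i : ℕ => 2 ^ i := by
  have h : Primrec fun n : ℕ => (n.rec 1 fun _ r => 2 * r : ℕ) :=
    Primrec.nat_rec₁ 1 ((Primrec.nat_mul.comp (Primrec.const 2) Primrec.snd).to₂)
  refine h.of_eq fun n => ?_
  induction n with
  | zero => rfl
  | succ n ih => simp only [ih]; ring

lemma primrec_mem_Dset : PrimrecRel fun i u : ℕ => i ∈ Dset u := by
  have h : PrimrecRel fun i u : ℕ => u / 2 ^ i % 2 = 1 :=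
    Primrec.eq.comp (Primrec.nat_mod.comp (Primrec.nat_div.comp Primrec.snd
      (primrec_two_pow.comp Primrec.fst)) (Primrec.const 2)) (Primrec.const 1)
  exact h.of_eq fun i u => by simp [Dset, Nat.testBit_eq_decide_div_mod_eq]

lemma lt_of_mem_Dset {i u : ℕ} (h : i ∈ Dset u) : i < u :=
  Nat.lt_two_pow_self.trans_le (Nat.ge_two_pow_of_testBit h)

lemma PrimrecRel.bex_lt {β : Type*} [Primcodable β] {R : ℕ → β → Prop} (h : PrimrecRel R) :
    PrimrecRel fun (n : ℕ) (b : β) => ∃ x < n, R x b :=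
  (h.exists_mem_list.comp (Primrec.list_range.comp Primrec.fst) Primrec.snd).of_eq (by simp)

lemma PrimrecRel.ball_lt {β : Type*} [Primcodable β] {R : ℕ → β → Prop} (h : PrimrecRel R) :
    PrimrecRel fun (n : ℕ) (b : β) => ∀ x < n, R x b :=
  (h.forall_mem_list.comp (Primrec.list_range.comp Primrec.fst) Primrec.snd).of_eq (by simp)

lemma primrec_Dset_subset : PrimrecRel fun u v : ℕ => Dset u ⊆ Dset v := by
  have h1 : PrimrecRel fun (i : ℕ) (p : ℕ × ℕ) => i ∈ Dset p.1 → i ∈ Dset p.2 := by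
    have ha : PrimrecRel fun (i : ℕ) (p : ℕ × ℕ) => ¬ i ∈ Dset p.1 :=
      (primrec_mem_Dset.comp Primrec.fst (Primrec.fst.comp Primrec.snd)).not
    have hb : PrimrecRel fun (i : ℕ) (p : ℕ × ℕ) => i ∈ Dset p.2 :=
      primrec_mem_Dset.comp Primrec.fst (Primrec.snd.comp Primrec.snd)
    exact (PrimrecPred.or ha hb).of_eq fun p => by tauto
  have h2 := h1.ball_lt
  have h3 : PrimrecRel fun u v : ℕ => ∀ i < u, i ∈ Dset u → i ∈ Dset v :=
    h2.comp Primrec.fst Primrec.id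
  exact h3.of_eq fun u v => ⟨fun h i hi => h i (lt_of_mem_Dset hi) hi, fun h i _ hi => h hi⟩

lemma finite_Dset (u : ℕ) : (Dset u).Finite :=
  (Set.finite_Iio u).subset fun _ h => lt_of_mem_Dset h

lemma Dset_two_pow (n : ℕ) : Dset (2 ^ n) = {n} := by
  ext i
  simp [Dset, Nat.testBit_two_pow, eq_comm]

lemma Dset_lor (u v : ℕ) : Dset (u ||| v) = Dset u ∪ Dset v := by
  ext i
  simp [Dset]

lemma exists_Dset_eq {F : Set ℕ} (hF : F.Finite) : ∃ u, Dset u = F := by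
  induction F, hF using Set.Finite.induction_on with
  | empty => exact ⟨0, by ext i; simp [Dset]⟩
  | @insert a F _ _ ih =>
    obtain ⟨u, rfl⟩ := ih
    exact ⟨2 ^ a ||| u, by rw [Dset_lor, Dset_two_pow]; rfl⟩

lemma enumOp_mono (W : Set ℕ) {X Y : Set ℕ} (h : X ⊆ Y) : enumOp W X ⊆ enumOp W Y := by
  rintro x ⟨u, hu, hX⟩
  exact ⟨u, hu, hX.trans h⟩

/-! ### Enumeration reducibility -/

lemma EnumRed.trans {X Y Z : Set ℕ} (hXY : EnumRed X Y) (hYZ : EnumRed Y Z) : EnumRed X Z := by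
  obtain ⟨V, hV, rfl⟩ := hXY
  obtain ⟨W, hW, rfl⟩ := hYZ
  obtain ⟨P, hP, hPm, hPV⟩ := hV.exists_stage
  obtain ⟨Q, hQ, hQm, hQW⟩ := hW.exists_stage
  -- `⟨x, v⟩` is enumerated once, within some bound `b`, a pair `⟨x, u⟩ ∈ V` has appeared and
  -- each `y ∈ D_u` has a pair `⟨y, w⟩ ∈ W` with `D_w ⊆ D_v`.
  let R : ℕ → ℕ → Prop := fun z b => ∃ u < b, P (Nat.pair z.unpair.1 u) b ∧
    ∀ y < u, y ∈ Dset u → ∃ w < b, Q (Nat.pair y w) b ∧ Dset w ⊆ Dset z.unpair.2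
  have hR : PrimrecRel R := by
    have h1 : PrimrecRel fun (w : ℕ) (p : ℕ × ℕ × ℕ) =>
        Q (Nat.pair p.1 w) p.2.1 ∧ Dset w ⊆ Dset p.2.2 := by
      refine PrimrecPred.and ?_ ?_
      · exact hQ.comp (Primrec₂.natPair.comp (Primrec.fst.comp Primrec.snd) Primrec.fst)
          (Primrec.fst.comp (Primrec.snd.comp Primrec.snd))
      · exact primrec_Dset_subset.comp Primrec.fst
          (Primrec.snd.comp (Primrec.snd.comp Primrec.snd))
    have h2 : PrimrecRel fun (y : ℕ) (p : ℕ × ℕ × ℕ) => y ∈ Dset p.1 →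
        ∃ w < p.2.1, Q (Nat.pair y w) p.2.1 ∧ Dset w ⊆ Dset p.2.2 := by
      have ha : PrimrecRel fun (y : ℕ) (p : ℕ × ℕ × ℕ) => ¬ y ∈ Dset p.1 :=
        (primrec_mem_Dset.comp Primrec.fst (Primrec.fst.comp Primrec.snd)).not
      have hb : PrimrecRel fun (y : ℕ) (p : ℕ × ℕ × ℕ) =>
          ∃ w < p.2.1, Q (Nat.pair y w) p.2.1 ∧ Dset w ⊆ Dset p.2.2 :=
        h1.bex_lt.comp (Primrec.fst.comp (Primrec.snd.comp Primrec.snd))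
          (Primrec.fst.pair (Primrec.snd.comp Primrec.snd))
      exact (PrimrecPred.or ha hb).of_eq fun p => by tauto
    have h3 : PrimrecRel fun (u : ℕ) (p : ℕ × ℕ) => P (Nat.pair p.2.unpair.1 u) p.1 ∧
        ∀ y < u, y ∈ Dset u → ∃ w < p.1, Q (Nat.pair y w) p.1 ∧ Dset w ⊆ Dset p.2.unpair.2 := by
      have hz : Primrec fun q : ℕ × ℕ × ℕ => q.2.2.unpair :=
        Primrec.unpair.comp (Primrec.snd.comp Primrec.snd)
      refine PrimrecPred.and ?_ ?_
      · exact hP.comp (Primrec₂.natPair.comp (Primrec.fst.comp hz) Primrec.fst)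
          (Primrec.fst.comp Primrec.snd)
      · exact h2.ball_lt.comp Primrec.fst (Primrec.fst.pair
          ((Primrec.fst.comp Primrec.snd).pair (Primrec.snd.comp hz)))
    exact h3.bex_lt.comp Primrec.snd (Primrec.snd.pair Primrec.fst)
  refine ⟨{z | ∃ b, R z b}, CE.of_primrecRel hR, ?_⟩
  ext x
  constructor
  · rintro ⟨u, hu, hsub⟩
    have hsub' : ∀ y ∈ Dset u, ∃ w, Nat.pair y w ∈ W ∧ Dset w ⊆ Z := fun y hy => hsub hy
    choose! w hwW hwZ using hsub'
    obtain ⟨v, hv⟩ := exists_Dset_eq ((finite_Dset u).biUnion fun y _ => finite_Dset (w y))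
    obtain ⟨s, hs⟩ := (hPV _).1 hu
    have hst : ∀ y, ∃ t, y ∈ Dset u → Q (Nat.pair y (w y)) t := fun y => by
      by_cases hy : y ∈ Dset u
      · obtain ⟨t, ht⟩ := (hQW _).1 (hwW y hy)
        exact ⟨t, fun _ => ht⟩
      · exact ⟨0, fun h => absurd h hy⟩
    choose t ht using hst
    obtain ⟨M, hM⟩ := ((finite_Dset u).image fun y => max (t y) (w y)).bddAbove
    have hM' : ∀ y ∈ Dset u, max (t y) (w y) ≤ M := fun y hy => hM ⟨y, hy, rfl⟩
    refine ⟨v, ⟨s + u + M + 1, u, by omega, ?_, ?_⟩, ?_⟩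
    · simpa using hPm _ _ _ (by omega) hs
    · intro y _ hy
      have := hM' y hy
      refine ⟨w y, by omega, hQm _ _ _ (by omega) (ht y hy), ?_⟩
      simpa [hv] using Set.subset_biUnion_of_mem (u := fun y => Dset (w y)) hy
    · rw [hv]
      exact Set.iUnion₂_subset fun y hy => hwZ y hy
  · rintro ⟨v, ⟨b, u, -, hu, hall⟩, hvZ⟩
    simp only [Nat.unpair_pair] at hu hall
    refine ⟨u, (hPV _).2 ⟨b, hu⟩, fun y hy => ?_⟩
    obtain ⟨w, -, hw, hwv⟩ := hall y (lt_of_mem_Dset hy) hy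
    exact ⟨w, (hQW _).2 ⟨b, hw⟩, hwv.trans hvZ⟩

/-- Many-one reductions, in a form that allows a primitive recursive set `T` of inputs to be
accepted outright and the reduction `f` to be consulted only on a primitive recursive set `S`. -/
lemma EnumRed.of_union_preimage {f : ℕ → ℕ} (hf : Primrec f) {T : Set ℕ}
    (hT : PrimrecPred fun x => x ∈ T) {S : Set ℕ} (hS : PrimrecPred fun x => x ∈ S) (Y : Set ℕ) :
    EnumRed (T ∪ (S ∩ f ⁻¹' Y)) Y := by
  refine ⟨{z | z.unpair.1 ∈ T ∨ (z.unpair.1 ∈ S ∧ z.unpair.2 = 2 ^ f z.unpair.1)},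
    PrimrecPred.ce ?_, ?_⟩
  · have h1 : Primrec fun z : ℕ => z.unpair.1 := Primrec.fst.comp Primrec.unpair
    have h2 : Primrec fun z : ℕ => z.unpair.2 := Primrec.snd.comp Primrec.unpair
    exact (hT.comp h1).or ((hS.comp h1).and
      (Primrec.eq.comp h2 (primrec_two_pow.comp (hf.comp h1))))
  · ext x
    simp only [enumOp, Set.mem_union, Set.mem_inter_iff, Set.mem_preimage, Set.mem_ofPred_eq,
      Nat.unpair_pair]
    constructor
    · rintro (h | ⟨hS, h⟩)
      · exact ⟨0, Or.inl h, fun i hi => by simp [Dset] at hi⟩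
      · exact ⟨_, Or.inr ⟨hS, rfl⟩, by simpa [Dset_two_pow] using h⟩
    · rintro ⟨u, h | ⟨hS, rfl⟩, hu⟩
      · exact Or.inl h
      · exact Or.inr ⟨hS, by simpa [Dset_two_pow] using hu⟩

lemma EnumRed.of_preimage {f : ℕ → ℕ} (hf : Primrec f) {X Y : Set ℕ} (h : ∀ x, x ∈ X ↔ f x ∈ Y) :
    EnumRed X Y := by
  have := EnumRed.of_union_preimage hf (T := ∅) (S := Set.univ)
    ((PrimrecPred.not (Primrec.eq.comp Primrec.id Primrec.id)).of_eq fun x => by simp)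
    ((Primrec.eq.comp Primrec.id Primrec.id : PrimrecPred fun x : ℕ => id x = id x).of_eq
      fun x => by simp) Y
  have hX : X = ∅ ∪ (Set.univ ∩ f ⁻¹' Y) := by ext x; simp [h]
  rwa [hX]

lemma EnumRed.refl (X : Set ℕ) : EnumRed X X := .of_preimage Primrec.id fun _ => Iff.rfl

lemma two_mul_mem_oplus {A X : Set ℕ} {x : ℕ} : 2 * x ∈ oplus A X ↔ x ∈ A := by
  simp only [oplus, Set.mem_union, Set.mem_image]
  constructor
  · rintro (⟨y, hy, h⟩ | ⟨y, hy, h⟩)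
    · rwa [show x = y by omega]
    · omega
  · exact fun h => Or.inl ⟨x, h, rfl⟩

lemma two_mul_add_one_mem_oplus {A X : Set ℕ} {x : ℕ} : 2 * x + 1 ∈ oplus A X ↔ x ∈ X := by
  simp only [oplus, Set.mem_union, Set.mem_image]
  constructor
  · rintro (⟨y, hy, h⟩ | ⟨y, hy, h⟩)
    · omega
    · rwa [show x = y by omega]
  · exact fun h => Or.inr ⟨x, h, rfl⟩

lemma EnumRed.oplus_left (A X : Set ℕ) : EnumRed A (oplus A X) :=
  .of_preimage Primrec.nat_double fun _ => two_mul_mem_oplus.symm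

lemma EnumRed.oplus_right (A X : Set ℕ) : EnumRed X (oplus A X) :=
  .of_preimage Primrec.nat_double_succ fun _ => two_mul_add_one_mem_oplus.symm

lemma primrecPred_mem_finset (F : Finset ℕ) : PrimrecPred fun x => x ∈ F := by
  induction F using Finset.induction_on with
  | empty =>
    exact ((Primrec.eq.comp Primrec.id Primrec.id).not :
      PrimrecPred fun x : ℕ => ¬ id x = id x).of_eq fun x => by simp
  | insert a F _ ih =>
    exact (PrimrecPred.or (Primrec.eq.comp Primrec.id (Primrec.const a)) ih).of_eq
      fun x => by simp

lemma EnumRed.oplus_cofinite (A : Set ℕ) (F : Finset ℕ) : EnumRed (oplus A {i | i ∉ F}) A := by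
  have hhalf : Primrec fun x : ℕ => x / 2 := Primrec.nat_div.comp Primrec.id (Primrec.const 2)
  have hodd : PrimrecPred fun x : ℕ => x % 2 = 1 :=
    Primrec.eq.comp (Primrec.nat_mod.comp Primrec.id (Primrec.const 2)) (Primrec.const 1)
  have hT : PrimrecPred fun x => x ∈ {x : ℕ | x % 2 = 1 ∧ x / 2 ∉ F} :=
    hodd.and ((primrecPred_mem_finset F).comp hhalf).not
  have hS : PrimrecPred fun x => x ∈ {x : ℕ | ¬ x % 2 = 1} := hodd.not
  convert EnumRed.of_union_preimage hhalf hT hS A using 1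
  ext x
  obtain ⟨y, rfl | rfl⟩ : ∃ y, x = 2 * y ∨ x = 2 * y + 1 := ⟨x / 2, by omega⟩
  · simp [two_mul_mem_oplus]
  · have h1 : (2 * y + 1) % 2 = 1 := by omega
    have h2 : (2 * y + 1) / 2 = y := by omega
    simp [two_mul_add_one_mem_oplus, h1, h2]

lemma countable_setOf_CE : {W : Set ℕ | CE W}.Countable := by
  refine (Set.countable_range fun c : Code => (Code.eval c).Dom).mono ?_
  rintro W ⟨f, hf, rfl⟩
  obtain ⟨c, rfl⟩ := Code.exists_code.1 (Partrec.nat_iff.1 hf)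
  exact ⟨c, rfl⟩

lemma countable_setOf_enumRed (Y : Set ℕ) : {X | EnumRed X Y}.Countable := by
  refine (countable_setOf_CE.image fun W => enumOp W Y).mono ?_
  rintro X ⟨W, hW, rfl⟩
  exact ⟨W, hW, rfl⟩

/-! ### Generic sets in Cantor space -/

/-- The subset of `ℕ` with characteristic function `x`. -/
def charSet (x : ℕ → Bool) : Set ℕ := {i | x i = true}

/-- The points `x` of Cantor space for which `Φ_W(A ⊕ x)` enumerates only elements of `Y`. -/
def soundSet (W A Y : Set ℕ) : Set (ℕ → Bool) := {x | enumOp W (oplus A (charSet x)) ⊆ Y}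

lemma isOpen_mem_oplus (A : Set ℕ) (j : ℕ) : IsOpen {x : ℕ → Bool | j ∈ oplus A (charSet x)} := by
  obtain ⟨i, rfl | rfl⟩ : ∃ i, j = 2 * i ∨ j = 2 * i + 1 := ⟨j / 2, by omega⟩
  · simp only [two_mul_mem_oplus]
    exact isOpen_const
  · simp only [two_mul_add_one_mem_oplus]
    exact (isOpen_discrete ({true} : Set Bool)).preimage (continuous_apply (A := fun _ => Bool) i)

lemma isClosed_soundSet (W A Y : Set ℕ) : IsClosed (soundSet W A Y) := by
  have h : (soundSet W A Y)ᶜ = ⋃ y ∈ Yᶜ, ⋃ u ∈ {u | Nat.pair y u ∈ W},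
      ⋂ j ∈ Dset u, {x : ℕ → Bool | j ∈ oplus A (charSet x)} := by
    ext x
    simp only [soundSet, Set.mem_compl_iff, Set.mem_ofPred_eq, Set.not_subset, Set.mem_iUnion,
      Set.mem_iInter, enumOp, exists_prop]
    constructor
    · rintro ⟨y, ⟨u, hu, hs⟩, hy⟩
      exact ⟨y, hy, u, hu, fun j hj => hs hj⟩
    · rintro ⟨y, hy, u, hu, hs⟩
      exact ⟨y, ⟨u, hu, fun j hj => hs j hj⟩, hy⟩
  rw [← isOpen_compl_iff, h]
  exact isOpen_biUnion fun y _ => isOpen_biUnion fun u _ =>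
    (finite_Dset u).isOpen_biInter fun j _ => isOpen_mem_oplus A j

/-- The forcing step. If a whole neighbourhood of `x` is sound for `Y`, then it contains the
largest set agreeing with `x` on finitely many places; this set is cofinite, so it adds nothing to
the enumeration power of `A`, but it lets `Φ_W` enumerate at least as much as `x` does. -/
lemma enumRed_of_mem_interior {W A Y : Set ℕ} (hW : CE W) {x : ℕ → Bool}
    (hx : x ∈ interior (soundSet W A Y)) (hY : Y = enumOp W (oplus A (charSet x))) :
    EnumRed Y A := by
  obtain ⟨F, U, hU, hsub⟩ := isOpen_pi_iff.1 isOpen_interior x hx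
  let z : ℕ → Bool := fun i => decide (i ∉ F.filter fun i => x i = false)
  have hz : z ∈ soundSet W A Y := by
    refine interior_subset (hsub fun i hi => ?_)
    have hzi : z i = x i := by
      have : i ∈ F := hi
      cases h : x i <;> simp [z, h, this]
    exact hzi ▸ (hU i hi).2
  have hxz : charSet x ⊆ charSet z := fun i hi => by
    have : x i = true := hi
    simp [charSet, z, this]
  have hYz : Y = enumOp W (oplus A (charSet z)) := by
    refine Set.Subset.antisymm ?_ hz
    conv_lhs => rw [hY]
    exact enumOp_mono W (Set.union_subset_union_right _ (Set.image_mono hxz))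
  have hcof : charSet z = {i | i ∉ F.filter fun i => x i = false} := by
    ext i
    simp [charSet, z, imp_iff_not_or]
  have h : EnumRed Y (oplus A (charSet z)) := ⟨W, hW, hYz⟩
  exact h.trans (hcof ▸ EnumRed.oplus_cofinite A _)

/-- If `Φ_W(A ⊕ x) = Y` then `x` lies in the closed set `soundSet W A Y` but, as `Y ≰ₑ A`, not in
its interior; the frontier of a closed set is nowhere dense, and there are countably many `W`. -/
lemma isMeagre_enumRed {A Y : Set ℕ} (hY : ¬ EnumRed Y A) :
    IsMeagre {x : ℕ → Bool | EnumRed Y (oplus A (charSet x))} := by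
  have hm : IsMeagre (⋃ W ∈ {W | CE W}, frontier (soundSet W A Y)) :=
    isMeagre_biUnion countable_setOf_CE fun W _ =>
      (isClosed_frontier.isNowhereDense_iff.2
        (interior_frontier (isClosed_soundSet W A Y))).isMeagre
  refine hm.mono ?_
  rintro x ⟨W, hW, hx⟩
  refine Set.mem_biUnion (x := W) hW ?_
  rw [(isClosed_soundSet W A Y).frontier_eq]
  exact ⟨hx.ge, fun hint => hY (enumRed_of_mem_interior hW hint hx)⟩

lemma isMeagre_singleton_cantor (x : ℕ → Bool) : IsMeagre {x} := by
  refine IsNowhereDense.isMeagre (isClosed_singleton.isNowhereDense_iff.2 ?_)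
  rw [Set.eq_empty_iff_forall_notMem]
  intro y hy
  obtain ⟨F, U, hU, hsub⟩ := isOpen_pi_iff.1 isOpen_interior y hy
  obtain ⟨i, hi⟩ := Infinite.exists_notMem_finset F
  have h1 : Function.update y i (!y i) ∈ ({x} : Set (ℕ → Bool)) := by
    refine interior_subset (hsub fun j hj => ?_)
    have hji : j ≠ i := fun h => hi (h ▸ hj)
    simpa [hji] using (hU j hj).2
  have h2 : y = x := Set.mem_singleton_iff.1 (interior_subset hy)
  have h3 := congrFun (Set.mem_singleton_iff.1 h1) i
  simp [h2] at h3

lemma isMeagre_oplus_mem {I : Set (Set ℕ)} (hI : I.Countable) (A : Set ℕ) :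
    IsMeagre {x : ℕ → Bool | oplus A (charSet x) ∈ I} := by
  have hinj : Function.Injective fun x : ℕ → Bool => oplus A (charSet x) := by
    intro x y hxy
    funext i
    have h : 2 * i + 1 ∈ oplus A (charSet x) ↔ 2 * i + 1 ∈ oplus A (charSet y) := by
      rw [show oplus A (charSet x) = oplus A (charSet y) from hxy]
    rw [two_mul_add_one_mem_oplus, two_mul_add_one_mem_oplus] at h
    exact Bool.eq_iff_iff.2 h
  have hc : {x : ℕ → Bool | oplus A (charSet x) ∈ I}.Countable := hI.preimage hinj
  rw [← Set.biUnion_of_singleton {x : ℕ → Bool | oplus A (charSet x) ∈ I}]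
  exact isMeagre_biUnion hc fun x _ => isMeagre_singleton_cantor x

/-- A sufficiently generic `x` gives `C = A ⊕ x` outside `I` that enumerates no member of `H`. -/
lemma exists_generic {I H : Set (Set ℕ)} {A : Set ℕ} (hI : I.Countable) (hH : H.Countable)
    (hHA : ∀ Y ∈ H, ¬ EnumRed Y A) :
    ∃ C, EnumRed A C ∧ C ∉ I ∧ ∀ Y ∈ H, ¬ EnumRed Y C := by
  have hm := (isMeagre_oplus_mem hI A).union
    (isMeagre_biUnion hH fun Y hY => isMeagre_enumRed (hHA Y hY))
  obtain ⟨x, hx⟩ := (dense_of_mem_residual hm).nonempty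
  simp only [Set.mem_compl_iff, Set.mem_union, Set.mem_iUnion, Set.mem_ofPred_eq, not_or,
    not_exists] at hx
  exact ⟨oplus A (charSet x), EnumRed.oplus_left _ _, hx.1, hx.2⟩

/-- The inductive extension step: given `𝓘, 𝓖` as usual, `A ∈ 𝓘`, and a finite
family `B₁,…,B_k ∈ 𝓘` with `Bᵢ ≰ₑ A`, there are extensions `𝓘⁺ ⊇ 𝓘`, `𝓖⁺ ⊇ 𝓖`
(countable, with `𝓘⁺` downwards `≤ₑ`-closed, `𝓖⁺` closed under `≡ₑ` and
disjoint from `𝓘⁺`) and a set `C >ₑ A` with `C ∈ 𝓘⁺` such that for every `i`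
there is `D ∈ 𝓖⁺` with `D ≤ₑ Bᵢ ⊕ C` (hence `Bᵢ ⊕ C ∉ 𝓘⁺`). -/
theorem splitting_extension_step (I G : Set (Set ℕ)) (A : Set ℕ)
    (k : ℕ) (B : Fin k → Set ℕ)
    (hIc : I.Countable) (hId : DownClosedE I)
    (hGc : G.Countable) (hGI : ∀ X ∈ G, X ∉ I) (hGe : EClosedEq G)
    (hAI : A ∈ I) (hBI : ∀ i, B i ∈ I) (hBA : ∀ i, ¬ EnumRed (B i) A) :
    ∃ (I' G' : Set (Set ℕ)) (C : Set ℕ),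
      I ⊆ I' ∧ G ⊆ G' ∧ I'.Countable ∧ G'.Countable ∧
      DownClosedE I' ∧ EClosedEq G' ∧ (∀ X ∈ G', X ∉ I') ∧
      EnumRed A C ∧ ¬ EnumRed C A ∧ C ∈ I' ∧
      (∀ i, (∃ D ∈ G', EnumRed D (oplus (B i) C)) ∧ oplus (B i) C ∉ I') := by
  -- Members of `G` are not `≤ₑ A`, since `A ∈ I` and `I` is downwards closed and disjoint from `G`.
  obtain ⟨C, hAC, hCI, hC⟩ := exists_generic (I := I) (H := G ∪ Set.range B) (A := A) hIc
    (hGc.union (Set.countable_range B)) (by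
      rintro Y (hY | ⟨i, rfl⟩) h
      · exact hGI Y hY (hId Y A h hAI)
      · exact hBA i h)
  have hdisj : ∀ X ∈ G ∪ ⋃ i, {X | EnumEq X (oplus (B i) C)}, X ∉ I ∪ {X | EnumRed X C} := by
    rintro X (hX | hX) (hXI | hXC)
    · exact hGI X hX hXI
    · exact hC X (Or.inl hX) hXC
    · obtain ⟨i, -, hi⟩ := Set.mem_iUnion.1 hX
      exact hCI (hId _ _ ((EnumRed.oplus_right (B i) C).trans hi) hXI)
    · obtain ⟨i, -, hi⟩ := Set.mem_iUnion.1 hX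
      exact hC (B i) (Or.inr ⟨i, rfl⟩) (((EnumRed.oplus_left (B i) C).trans hi).trans hXC)
  have hBC : ∀ i, oplus (B i) C ∈ G ∪ ⋃ i, {X | EnumEq X (oplus (B i) C)} := fun i =>
    Or.inr (Set.mem_iUnion.2 ⟨i, EnumRed.refl _, EnumRed.refl _⟩)
  refine ⟨I ∪ {X | EnumRed X C}, G ∪ ⋃ i, {X | EnumEq X (oplus (B i) C)}, C,
    Set.subset_union_left, Set.subset_union_left, hIc.union (countable_setOf_enumRed C),
    hGc.union (Set.countable_iUnion fun i => (countable_setOf_enumRed _).mono fun X h => h.1),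
    ?_, ?_, hdisj, hAC, fun h => hCI (hId C A h hAI), Or.inr (EnumRed.refl C),
    fun i => ⟨⟨_, hBC i, EnumRed.refl _⟩, hdisj _ (hBC i)⟩⟩
  · rintro X Y hXY (hY | hY)
    · exact Or.inl (hId X Y hXY hY)
    · exact Or.inr (EnumRed.trans hXY hY)
  · rintro X Y hXY (hX | hX)
    · exact Or.inl (hGe X Y hXY hX)
    · obtain ⟨i, hi1, hi2⟩ := Set.mem_iUnion.1 hX
      exact Or.inr (Set.mem_iUnion.2 ⟨i, hXY.2.trans hi1, hi2.trans hXY.1⟩)
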